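/- Let f(x,y) = ∑_{k,l≥0} c_{k,l} x^k y^l be the power series expansion of (1/(1-xy))·√((1+x)/(1-x))·√((1-y)/(1+y)). Then c_{k,l} = b(k)·b(l) if k ≡ l ≡ 0 (mod 2), c_{k,l} = 0 if k ≡ l ≡ 1 (mod 2), and c_{k,l} = 2·b(k)·b(l)/(k-l) otherwise, where b(k) = k! / (2^k · (⌊k/2⌋!)²). -/

import Mathlib

/-- `b(k) = k! / (2^k · (⌊k/2⌋!)²)`. -/
noncomputable def bcoef (k : ℕ) : ℝ :=
  (Nat.factorial k : ℝ) / (2 ^ k * ((Nat.factorial (k / 2) : ℝ)) ^ 2)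

/-- The coefficients `c_{k,l}`. -/
noncomputable def ccoef (k l : ℕ) : ℝ :=
  if k % 2 = 0 ∧ l % 2 = 0 then bcoef k * bcoef l
  else if k % 2 = 1 ∧ l % 2 = 1 then 0
  else 2 * bcoef k * bcoef l / ((k : ℝ) - (l : ℝ))

/-!
Let `a k` be the coefficients of `√((1 + x) / (1 - x)) = (1 + x) / √(1 - x²)`; the binomial series
for `(1 - t) ^ (-1 / 2)` gives `a (2m) = a (2m + 1) = b (2m)`. Multiplying
`∑ a k (-1) ^ l a l x ^ k y ^ l` by the geometric series in `x y` adds up its coefficients along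
the diagonals `(k - n, l - n)`, `n ≤ min k l`. So it suffices that `c` has the boundary values
`c k 0 = a k` and `c 0 l = (-1) ^ l a l`, and that its increment from `(k, l)` to `(k + 1, l + 1)`
is `(-1) ^ (l + 1) a (k + 1) a (l + 1)`, which follows from
`(2m + 2) b (2m + 2) = (2m + 1) b (2m)`.
-/

lemma hasSum_sum_range_min_diagonal {α : Type*} [AddCommMonoid α] [TopologicalSpace α]
    [ContinuousAdd α] [RegularSpace α] {f : ℕ × ℕ × ℕ → α} {s : α} (hf : HasSum f s) :
    HasSum (fun p : ℕ × ℕ ↦ ∑ n ∈ Finset.range (min p.1 p.2 + 1), f (n, p.1 - n, p.2 - n)) s := by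
  let shift : ℕ × ℕ × ℕ → ℕ × ℕ := fun q ↦ (q.2.1 + q.1, q.2.2 + q.1)
  refine ((Equiv.sigmaFiberEquiv shift).hasSum_iff.mpr hf).sigma fun p ↦ ?_
  let fiber : Finset (ℕ × ℕ × ℕ) :=
    (Finset.range (min p.1 p.2 + 1)).image fun n ↦ (n, p.1 - n, p.2 - n)
  have mem_fiber : ∀ q, q ∈ fiber ↔ shift q = p := by
    rintro ⟨n, k, l⟩
    simp only [fiber, shift, Finset.mem_image, Finset.mem_range, Prod.ext_iff]
    constructor
    · rintro ⟨_, _, rfl, rfl, rfl⟩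
      omega
    · intro h
      exact ⟨n, by omega, rfl, by omega, by omega⟩
  have hinj : Set.InjOn (fun n ↦ (n, p.1 - n, p.2 - n)) (Finset.range (min p.1 p.2 + 1)) :=
    fun _ _ _ _ h ↦ congrArg Prod.fst h
  rw [← Finset.sum_image (f := f) hinj]
  exact (Equiv.subtypeEquivRight mem_fiber).hasSum_iff.mp (fiber.hasSum f)

lemma hasSum_sum_range_min_mul_pow {𝕜 : Type*} [NormedField 𝕜] [CompleteSpace 𝕜]
    {a b : ℕ → 𝕜} {x y A B : 𝕜} (hxy : ‖x * y‖ < 1)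
    (hA : HasSum (fun k ↦ a k * x ^ k) A) (hA' : Summable fun k ↦ ‖a k * x ^ k‖)
    (hB : HasSum (fun l ↦ b l * y ^ l) B) (hB' : Summable fun l ↦ ‖b l * y ^ l‖) :
    HasSum (fun p : ℕ × ℕ ↦
        (∑ n ∈ Finset.range (min p.1 p.2 + 1), a (p.1 - n) * b (p.2 - n)) * x ^ p.1 * y ^ p.2)
      (1 / (1 - x * y) * (A * B)) := by
  have hAB := hA'.mul_norm hB'
  have hgeom := summable_norm_geometric_of_norm_lt_one hxy
  have hprod := (hasSum_geometric_of_norm_lt_one hxy).mul (hA.mul hB hAB.of_norm)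
    (hgeom.mul_norm hAB).of_norm
  rw [one_div]
  refine (hasSum_sum_range_min_diagonal hprod).congr_fun fun p ↦ ?_
  rw [mul_assoc, Finset.sum_mul]
  refine Finset.sum_congr rfl fun n hn ↦ ?_
  have hle : n ≤ min p.1 p.2 := Nat.lt_succ_iff.mp (Finset.mem_range.mp hn)
  rw [← pow_sub_mul_pow x (hle.trans (min_le_left _ _)),
    ← pow_sub_mul_pow y (hle.trans (min_le_right _ _))]
  ring

lemma bcoef_zero : bcoef 0 = 1 := by simp [bcoef]

lemma bcoef_two_mul_add_two (m : ℕ) :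
    bcoef (2 * m + 2) = (2 * m + 1) / (2 * m + 2) * bcoef (2 * m) := by
  have hhalf : (2 * m + 2) / 2 = m + 1 := by omega
  simp only [bcoef, hhalf, Nat.mul_div_cancel_left m two_pos, Nat.factorial_succ, pow_succ]
  push_cast
  field_simp
  ring

lemma bcoef_two_mul_add_one (m : ℕ) :
    bcoef (2 * m + 1) = (2 * m + 1) / 2 * bcoef (2 * m) := by
  have hhalf : (2 * m + 1) / 2 = m := by omega
  simp only [bcoef, hhalf, Nat.mul_div_cancel_left m two_pos, Nat.factorial_succ, pow_succ]
  push_cast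
  field_simp

lemma factorial_mul_bcoef_two_mul (m : ℕ) :
    m.factorial * bcoef (2 * m) = (ascPochhammer ℝ m).eval (1 / 2) := by
  induction m with
  | zero => simp [bcoef_zero]
  | succ m ih =>
    rw [ascPochhammer_succ_eval, ← ih, mul_add_one, bcoef_two_mul_add_two, Nat.factorial_succ]
    push_cast
    field_simp
    ring

lemma bcoef_two_mul (m : ℕ) : bcoef (2 * m) = Ring.choose ((1 / 2 : ℝ) + m - 1) m := by
  have hfact := Ring.factorial_nsmul_multichoose_eq_ascPochhammer (1 / 2 : ℝ) m
  rw [Polynomial.ascPochhammer_smeval_eq_eval, ← factorial_mul_bcoef_two_mul, nsmul_eq_mul,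
    Ring.multichoose_eq] at hfact
  exact (mul_left_cancel₀ (by positivity) hfact).symm

/-- The coefficients of the one-variable factor `√((1 + x) / (1 - x))`: since it equals
`(1 + x) / √(1 - x²)`, those at `2m` and `2m + 1` are both `bcoef (2 * m)`. -/
noncomputable def acoef (k : ℕ) : ℝ := bcoef (2 * (k / 2))

lemma acoef_two_mul (m : ℕ) : acoef (2 * m) = bcoef (2 * m) := by
  rw [acoef, Nat.mul_div_cancel_left m two_pos]

lemma acoef_two_mul_add_one (m : ℕ) : acoef (2 * m + 1) = bcoef (2 * m) := by
  rw [acoef, show (2 * m + 1) / 2 = m by omega]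

lemma acoef_zero : acoef 0 = 1 := bcoef_zero

lemma ccoef_even_even (m n : ℕ) : ccoef (2 * m) (2 * n) = bcoef (2 * m) * bcoef (2 * n) := by
  simp [ccoef]

lemma ccoef_odd_odd (m n : ℕ) : ccoef (2 * m + 1) (2 * n + 1) = 0 := by
  simp [ccoef, Nat.add_mod]

lemma ccoef_odd_even (m n : ℕ) : ccoef (2 * m + 1) (2 * n) =
    (2 * m + 1) * bcoef (2 * m) * bcoef (2 * n) / (2 * m + 1 - 2 * n) := by
  rw [ccoef, if_neg (by omega), if_neg (by omega), bcoef_two_mul_add_one]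
  push_cast
  ring

lemma ccoef_even_odd (m n : ℕ) : ccoef (2 * m) (2 * n + 1) =
    (2 * n + 1) * bcoef (2 * m) * bcoef (2 * n) / (2 * m - (2 * n + 1)) := by
  rw [ccoef, if_neg (by omega), if_neg (by omega), bcoef_two_mul_add_one]
  push_cast
  ring

lemma ccoef_zero_right (k : ℕ) : ccoef k 0 = acoef k := by
  obtain ⟨m, rfl | rfl⟩ := k.even_or_odd'
  · simpa [bcoef_zero, acoef_two_mul] using ccoef_even_even m 0
  · have h : (2 * m + 1 : ℝ) ≠ 0 := by positivity
    simpa [bcoef_zero, acoef_two_mul_add_one, h] using ccoef_odd_even m 0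

lemma ccoef_zero_left (l : ℕ) : ccoef 0 l = (-1) ^ l * acoef l := by
  obtain ⟨n, rfl | rfl⟩ := l.even_or_odd'
  · simpa [bcoef_zero, acoef_two_mul] using ccoef_even_even 0 n
  · have h : (2 * n + 1 : ℝ) ≠ 0 := by positivity
    have hodd := ccoef_even_odd 0 n
    rw [mul_zero, Nat.cast_zero, mul_zero, zero_sub, div_neg, bcoef_zero, mul_one,
      mul_div_cancel_left₀ _ h] at hodd
    rw [hodd, acoef_two_mul_add_one, (odd_two_mul_add_one n).neg_one_pow, neg_one_mul]

lemma two_mul_add_one_sub_two_mul_ne_zero (m n : ℕ) : (2 * m + 1 - 2 * n : ℝ) ≠ 0 := by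
  rw [sub_ne_zero]
  exact_mod_cast Nat.two_mul_ne_two_mul_add_one.symm

lemma ccoef_succ_succ (k l : ℕ) :
    ccoef (k + 1) (l + 1) = ccoef k l + acoef (k + 1) * ((-1) ^ (l + 1) * acoef (l + 1)) := by
  obtain ⟨m, rfl | rfl⟩ := k.even_or_odd' <;> obtain ⟨n, rfl | rfl⟩ := l.even_or_odd'
  · rw [ccoef_odd_odd, ccoef_even_even, acoef_two_mul_add_one, acoef_two_mul_add_one,
      (odd_two_mul_add_one n).neg_one_pow]
    ring
  · have hne : (2 * m - (2 * n + 1) : ℝ) ≠ 0 := by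
      rw [← neg_sub, neg_ne_zero]
      exact two_mul_add_one_sub_two_mul_ne_zero n m
    have hden : (2 * m + 1 - 2 * (n + 1 : ℕ) : ℝ) = 2 * m - (2 * n + 1) := by push_cast; ring
    rw [show 2 * n + 1 + 1 = 2 * (n + 1) by ring, ccoef_odd_even, ccoef_even_odd, hden,
      acoef_two_mul_add_one, acoef_two_mul, (even_two_mul _).neg_one_pow, mul_add_one,
      bcoef_two_mul_add_two]
    field_simp
    ring
  · have hne := two_mul_add_one_sub_two_mul_ne_zero m n
    have hden : (2 * (m + 1 : ℕ) - (2 * n + 1) : ℝ) = 2 * m + 1 - 2 * n := by push_cast; ring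
    rw [show 2 * m + 1 + 1 = 2 * (m + 1) by ring, ccoef_even_odd, ccoef_odd_even, hden,
      acoef_two_mul_add_one, acoef_two_mul, (odd_two_mul_add_one n).neg_one_pow, mul_add_one,
      bcoef_two_mul_add_two]
    field_simp
    ring
  · rw [show 2 * m + 1 + 1 = 2 * (m + 1) by ring, show 2 * n + 1 + 1 = 2 * (n + 1) by ring,
      ccoef_odd_odd, ccoef_even_even, acoef_two_mul, acoef_two_mul, (even_two_mul _).neg_one_pow]
    ring

lemma ccoef_eq_sum_range_min (k l : ℕ) :
    ccoef k l =
      ∑ n ∈ Finset.range (min k l + 1), acoef (k - n) * ((-1) ^ (l - n) * acoef (l - n)) := by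
  induction k generalizing l with
  | zero => simp [ccoef_zero_left, acoef_zero]
  | succ k ih =>
    cases l with
    | zero => simp [ccoef_zero_right, acoef_zero]
    | succ l =>
      rw [ccoef_succ_succ, ih, Nat.succ_min_succ, Finset.sum_range_succ' _ (min k l).succ]
      simp only [Nat.add_sub_add_right, Nat.sub_zero, Nat.succ_eq_add_one]

lemma hasSum_bcoef_two_mul_mul_pow {t : ℝ} (ht : |t| < 1) :
    HasSum (fun m ↦ bcoef (2 * m) * t ^ m) (1 / √(1 - t)) := by
  have h := (Real.one_div_one_sub_rpow_hasFPowerSeriesOnBall_zero (1 / 2)).hasSum (y := t)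
    (by simpa [enorm_eq_nnnorm, ← NNReal.coe_lt_coe] using ht)
  simpa [FormalMultilinearSeries.ofScalars, Real.sqrt_eq_rpow, bcoef_two_mul] using h

lemma sqrt_one_add_div_one_sub {x : ℝ} (hx : -1 < x) :
    √((1 + x) / (1 - x)) = (1 + x) / √(1 - x ^ 2) := by
  have hpos : 0 < 1 + x := by linarith
  rw [← mul_div_mul_left _ _ hpos.ne', ← sq, show (1 + x) * (1 - x) = 1 - x ^ 2 by ring,
    Real.sqrt_div (sq_nonneg _), Real.sqrt_sq hpos.le]

lemma hasSum_acoef_mul_pow {x : ℝ} (hx : |x| < 1) :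
    HasSum (fun k ↦ acoef k * x ^ k) √((1 + x) / (1 - x)) := by
  have hsq : |x ^ 2| < 1 := by rw [abs_pow]; exact pow_lt_one₀ (abs_nonneg x) hx two_ne_zero
  have hb := hasSum_bcoef_two_mul_mul_pow hsq
  rw [sqrt_one_add_div_one_sub (neg_lt_of_abs_lt hx), ← mul_one_div, one_add_mul]
  refine HasSum.even_add_odd ?_ ?_
  · simpa only [acoef_two_mul, pow_mul] using hb
  · refine (hb.mul_left x).congr_fun fun m ↦ ?_
    rw [acoef_two_mul_add_one, pow_succ, pow_mul]
    ring

theorem stmt2_general {x y : ℝ} (hx : |x| < 1) (hy : |y| < 1) :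
    HasSum (fun p : ℕ × ℕ ↦ ccoef p.1 p.2 * x ^ p.1 * y ^ p.2)
      ((1 / (1 - x * y)) * √((1 + x) / (1 - x)) * √((1 - y) / (1 + y))) := by
  have hxy : ‖x * y‖ < 1 := by
    rw [norm_mul]
    exact mul_lt_one_of_nonneg_of_lt_one_left (norm_nonneg x) hx hy.le
  have hA := hasSum_acoef_mul_pow hx
  have hB : HasSum (fun l ↦ (-1) ^ l * acoef l * y ^ l) √((1 - y) / (1 + y)) := by
    have h := hasSum_acoef_mul_pow (x := -y) (by rwa [abs_neg])
    simpa only [neg_pow y, mul_left_comm, mul_assoc, sub_neg_eq_add, ← sub_eq_add_neg] using h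
  have h := hasSum_sum_range_min_mul_pow hxy hA hA.summable.norm hB hB.summable.norm
  simpa only [ccoef_eq_sum_range_min, mul_assoc] using h

/-- The power series expansion of `(1/(1-xy))·√((1+x)/(1-x))·√((1-y)/(1+y))`
around `(0,0)` has coefficients `c_{k,l}`. -/
theorem stmt2 : ∃ r > (0 : ℝ), ∀ x y : ℝ, |x| < r → |y| < r →
    (1 / (1 - x * y)) * Real.sqrt ((1 + x) / (1 - x)) * Real.sqrt ((1 - y) / (1 + y)) =
      ∑' p : ℕ × ℕ, ccoef p.1 p.2 * x ^ p.1 * y ^ p.2 := by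
  exact ⟨1, one_pos, fun x y hx hy => (stmt2_general hx hy).tsum_eq.symm⟩
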